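/- Let e be an admissible tableau supported on X(v_6). If S(2k) = B∪{4n−1,4n+1}, then either S(1) = A∪{4n−2,4n,4n+2} (so rows 1 and 2k form the pattern X_4), or else S(1) = A∪{4n−2,4n−1,4n+2}, S(k) = A∪{4n,4n+1,4n+2} and S(k+1) = B∪{4n−2,4n} (so rows 1, k, k+1, 2k form the pattern Y_1). -/

import Mathlib

/-!
Each row picks exactly one of `t` and `8n+5-t` for every `t ≤ 4n+2` (pigeonhole on (R3)), so it is
determined by its small set. Write `mult i t ∈ {0,1}` for the multiplicity of `t` in row `i` and
`below i m` for the number of entries `≤ m` of row `i`. Then (R5) says that each `t ≤ 4n+2` lies in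
exactly `k` of the `2k` small sets, (R2) says that `below i m` is nonincreasing in `i`, and (R4)
says that `below i (4n+2)` is even.

The proof repeatedly uses that a function on the `2k` rows whose values are at least (or at most)
`p` on the upper half and `q` on the lower half, and whose sum is `k(p+q)`, takes exactly these
values (`eq_of_lower`, `eq_of_upper`).

The last row gives `below i (2j) ≥ j` for `j ≤ 2n-2`, and these bounds add up to the total `2kj`
forced by (R5), hence are equalities; so the upper `k` rows contain exactly the odd numbers and the
lower `k` rows exactly the even numbers of `{1,…,4n-4}` (`below_even`, `mult_split`).

What is left is a chain of subsets of the six numbers `4n-3,…,4n+2` (`six_columns`). There the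
upper rows have four elements and the lower rows two, `4n-3` and `4n+2` lie exactly in the upper
rows, and a finite analysis of which two of `4n-2,…,4n+1` lie in rows `1`, `k`, `k+1` concludes.
-/

/-- The "small set" `S(i) = { e(i,j) : 1 ≤ j ≤ 4n+2, e(i,j) ≤ 4n+2 }` of row `i`. -/
def smallSet (n : ℕ) (e : ℕ → ℕ → ℕ) (i : ℕ) : Finset ℕ :=
  ((Finset.Icc 1 (4*n+2)).filter (fun j => e i j ≤ 4*n+2)).image (e i)

/-- `A = {1,3,5,…,4n-3}`, the odd integers `≤ 4n-3`. -/
def setA (n : ℕ) : Finset ℕ := (Finset.Icc 1 (4*n-3)).filter (fun t => ¬ 2 ∣ t)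

/-- `B = {2,4,…,4n-4}`, the even integers `≤ 4n-4`. -/
def setB (n : ℕ) : Finset ℕ := (Finset.Icc 1 (4*n-4)).filter (fun t => 2 ∣ t)

/-- An admissible tableau: `e i j ∈ {1,…,8n+4}` for `1 ≤ i ≤ 2k`, `1 ≤ j ≤ 4n+2`,
subject to the conditions (R1)–(R5). -/
structure IsAdmissible (n k : ℕ) (e : ℕ → ℕ → ℕ) : Prop where
  mem_range : ∀ i j, 1 ≤ i → i ≤ 2*k → 1 ≤ j → j ≤ 4*n+2 → 1 ≤ e i j ∧ e i j ≤ 8*n+4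
  /-- (R1) rows strictly increase -/
  row_strict : ∀ i j, 1 ≤ i → i ≤ 2*k → 1 ≤ j → j < 4*n+2 → e i j < e i (j+1)
  /-- (R2) columns are nondecreasing -/
  col_mono : ∀ i j, 1 ≤ i → i < 2*k → 1 ≤ j → j ≤ 4*n+2 → e i j ≤ e (i+1) j
  /-- (R3) no row contains both `t` and `8n+5-t` -/
  no_pair : ∀ i j j', 1 ≤ i → i ≤ 2*k → 1 ≤ j → j ≤ 4*n+2 → 1 ≤ j' → j' ≤ 4*n+2 →
    e i j + e i j' ≠ 8*n+5
  /-- (R4) each row has an even number of entries `> 4n+2` -/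
  even_big : ∀ i, 1 ≤ i → i ≤ 2*k →
    Even (((Finset.Icc 1 (4*n+2)).filter (fun j => 4*n+2 < e i j)).card)
  /-- (R5) `t` and `8n+5-t` occur equally often in the tableau -/
  balanced : ∀ t, 1 ≤ t → t ≤ 8*n+4 →
    (((Finset.Icc 1 (2*k)) ×ˢ (Finset.Icc 1 (4*n+2))).filter
      (fun p => e p.1 p.2 = t)).card =
    (((Finset.Icc 1 (2*k)) ×ˢ (Finset.Icc 1 (4*n+2))).filter
      (fun p => e p.1 p.2 = 8*n+5-t)).card

/-- The first `4n+2` entries of the one-line notation of `v₆`. -/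
def bnd (n : ℕ) (j : ℕ) : ℕ :=
  if j ≤ 2*n-2 then 2*j
  else if j = 2*n-1 then 4*n-1
  else if j = 2*n then 4*n+2
  else if j = 2*n+1 then 4*n+4
  else if j = 2*n+2 then 4*n+5
  else if j = 2*n+3 then 4*n+7
  else 2*j

/-- The tableau is supported on the Schubert variety `X(v₆)`. -/
def SupportedOnXv6 (n k : ℕ) (e : ℕ → ℕ → ℕ) : Prop :=
  ∀ j, 1 ≤ j → j ≤ 4*n+2 → e (2*k) j ≤ bnd n j

/-! ### Functions on the rows with prescribed sum -/

lemma sum_two_levels (k p q : ℕ) :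
    ∑ i ∈ Finset.Icc 1 (2*k), (if i ≤ k then p else q) = k * (p + q) := by
  have h1 : (Finset.Icc 1 (2*k)).filter (fun i => i ≤ k) = Finset.Icc 1 k := by
    ext i; simp only [Finset.mem_filter, Finset.mem_Icc]; omega
  have h2 : (Finset.Icc 1 (2*k)).filter (fun i => ¬ i ≤ k) = Finset.Icc (k+1) (2*k) := by
    ext i; simp only [Finset.mem_filter, Finset.mem_Icc]; omega
  rw [Finset.sum_ite, h1, h2]
  simp only [Finset.sum_const, Nat.card_Icc, smul_eq_mul]
  rw [show k + 1 - 1 = k by omega, show 2*k + 1 - (k+1) = k by omega]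
  ring

lemma eq_of_lower {k p q : ℕ} {u : ℕ → ℕ}
    (hp : ∀ i, 1 ≤ i → i ≤ k → p ≤ u i) (hq : ∀ i, k < i → i ≤ 2*k → q ≤ u i)
    (hs : ∑ i ∈ Finset.Icc 1 (2*k), u i = k * (p + q)) (i : ℕ) (h1 : 1 ≤ i) (h2 : i ≤ 2*k) :
    u i = if i ≤ k then p else q := by
  have hle : ∀ i ∈ Finset.Icc 1 (2*k), (if i ≤ k then p else q) ≤ u i := by
    intro i hi
    rw [Finset.mem_Icc] at hi
    split_ifs with h
    · exact hp i hi.1 h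
    · exact hq i (by omega) hi.2
  exact ((Finset.sum_eq_sum_iff_of_le hle).1 ((sum_two_levels k p q).trans hs.symm) i
    (Finset.mem_Icc.2 ⟨h1, h2⟩)).symm

lemma eq_of_upper {k p q : ℕ} {u : ℕ → ℕ}
    (hp : ∀ i, 1 ≤ i → i ≤ k → u i ≤ p) (hq : ∀ i, k < i → i ≤ 2*k → u i ≤ q)
    (hs : ∑ i ∈ Finset.Icc 1 (2*k), u i = k * (p + q)) (i : ℕ) (h1 : 1 ≤ i) (h2 : i ≤ 2*k) :
    u i = if i ≤ k then p else q := by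
  have hle : ∀ i ∈ Finset.Icc 1 (2*k), u i ≤ (if i ≤ k then p else q) := by
    intro i hi
    rw [Finset.mem_Icc] at hi
    split_ifs with h
    · exact hp i hi.1 h
    · exact hq i (by omega) hi.2
  exact (Finset.sum_eq_sum_iff_of_le hle).1 (hs.trans (sum_two_levels k p q).symm) i
    (Finset.mem_Icc.2 ⟨h1, h2⟩)

/-- A nonincreasing `0/1`-valued function on the rows with sum `k` is the indicator of the upper
half. -/
lemma eq_of_antitone {k : ℕ} {u : ℕ → ℕ} (hu : ∀ i, 1 ≤ i → i ≤ 2*k → u i ≤ 1)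
    (ha : ∀ i i', 1 ≤ i → i ≤ i' → i' ≤ 2*k → u i' ≤ u i)
    (hs : ∑ i ∈ Finset.Icc 1 (2*k), u i = k) (i : ℕ) (h1 : 1 ≤ i) (h2 : i ≤ 2*k) :
    u i = if i ≤ k then 1 else 0 := by
  by_cases hk : 1 ≤ u k
  · exact eq_of_lower (fun i h h' => hk.trans (ha i k h h' (by omega))) (fun _ _ _ => Nat.zero_le _)
      (by rw [hs]; ring) i h1 h2
  · refine eq_of_upper (fun i h h' => hu i h (by omega)) (fun i h h' => ?_) (by rw [hs]; ring) i h1 h2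
    have := ha k i (by omega) h.le h'
    omega

/-! ### Row statistics -/

/-- The multiplicity of the entry `t` in row `i`. -/
def mult (n : ℕ) (e : ℕ → ℕ → ℕ) (i t : ℕ) : ℕ :=
  ((Finset.Icc 1 (4*n+2)).filter (fun j => e i j = t)).card

/-- The number of entries `≤ m` in row `i`. -/
def below (n : ℕ) (e : ℕ → ℕ → ℕ) (i m : ℕ) : ℕ :=
  ((Finset.Icc 1 (4*n+2)).filter (fun j => e i j ≤ m)).card

lemma below_succ (n : ℕ) (e : ℕ → ℕ → ℕ) (i m : ℕ) :
    below n e i (m+1) = below n e i m + mult n e i (m+1) := by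
  unfold below mult
  rw [← Finset.card_union_of_disjoint]
  · congr 1
    ext j
    simp only [Finset.mem_filter, Finset.mem_union]
    have : e i j ≤ m + 1 ↔ e i j ≤ m ∨ e i j = m + 1 := by omega
    tauto
  · rw [Finset.disjoint_left]
    intro j h h'
    simp only [Finset.mem_filter] at h h'
    omega

lemma mem_smallSet {n : ℕ} {e : ℕ → ℕ → ℕ} {i t : ℕ} :
    t ∈ smallSet n e i ↔ t ≤ 4*n+2 ∧ 1 ≤ mult n e i t := by
  unfold smallSet mult
  rw [Nat.succ_le_iff, Finset.card_pos]
  simp only [Finset.mem_image, Finset.mem_filter, Finset.Nonempty]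
  constructor
  · rintro ⟨j, ⟨hj, hle⟩, rfl⟩
    exact ⟨hle, j, hj, rfl⟩
  · rintro ⟨hle, j, hj, rfl⟩
    exact ⟨j, ⟨hj, hle⟩, rfl⟩

section Admissible

variable {n k : ℕ} {e : ℕ → ℕ → ℕ}

lemma row_lt (he : IsAdmissible n k e) {i j j' : ℕ} (h1 : 1 ≤ i) (h2 : i ≤ 2*k)
    (hj : 1 ≤ j) (hjj : j < j') (hj' : j' ≤ 4*n+2) : e i j < e i j' := by
  induction j', hjj using Nat.le_induction with
  | base => exact he.row_strict i j h1 h2 hj (by omega)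
  | succ m hm ih => exact (ih (by omega)).trans (he.row_strict i m h1 h2 (by omega) (by omega))

lemma row_inj (he : IsAdmissible n k e) {i j j' : ℕ} (h1 : 1 ≤ i) (h2 : i ≤ 2*k)
    (hj : j ∈ Finset.Icc 1 (4*n+2)) (hj' : j' ∈ Finset.Icc 1 (4*n+2)) (h : e i j = e i j') :
    j = j' := by
  rw [Finset.mem_Icc] at hj hj'
  rcases lt_trichotomy j j' with hlt | heq | hlt
  · have := row_lt he h1 h2 hj.1 hlt hj'.2; omega
  · exact heq
  · have := row_lt he h1 h2 hj'.1 hlt hj.2; omega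

lemma mult_le_one (he : IsAdmissible n k e) {i : ℕ} (h1 : 1 ≤ i) (h2 : i ≤ 2*k) (t : ℕ) :
    mult n e i t ≤ 1 := by
  unfold mult
  rw [Finset.card_le_one]
  intro a ha b hb
  rw [Finset.mem_filter] at ha hb
  exact row_inj he h1 h2 ha.1 hb.1 (ha.2.trans hb.2.symm)

lemma below_zero (he : IsAdmissible n k e) {i : ℕ} (h1 : 1 ≤ i) (h2 : i ≤ 2*k) :
    below n e i 0 = 0 := by
  unfold below
  rw [Finset.card_eq_zero, Finset.filter_eq_empty_iff]
  intro j hj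
  rw [Finset.mem_Icc] at hj
  have := he.mem_range i j h1 h2 hj.1 hj.2
  omega

lemma col_le (he : IsAdmissible n k e) {i i' j : ℕ} (h1 : 1 ≤ i) (hii : i ≤ i') (h2 : i' ≤ 2*k)
    (hj : 1 ≤ j) (hj' : j ≤ 4*n+2) : e i j ≤ e i' j := by
  induction i', hii using Nat.le_induction with
  | base => exact le_rfl
  | succ m hm ih => exact (ih (by omega)).trans (he.col_mono m j (by omega) (by omega) hj hj')

lemma below_antitone (he : IsAdmissible n k e) {i i' : ℕ} (m : ℕ) (h1 : 1 ≤ i) (hii : i ≤ i')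
    (h2 : i' ≤ 2*k) : below n e i' m ≤ below n e i m := by
  unfold below
  apply Finset.card_le_card
  intro j hj
  rw [Finset.mem_filter] at hj ⊢
  have hj1 := Finset.mem_Icc.1 hj.1
  exact ⟨hj.1, (col_le he h1 hii h2 hj1.1 hj1.2).trans hj.2⟩

/-- Row `i` contains one of `t` and `8n+5-t`: folding the `4n+2` entries by `x ↦ 8n+5-x` into
`{1,…,4n+2}` is injective by (R3), hence surjective. -/
lemma mult_add_mult (he : IsAdmissible n k e) {i t : ℕ} (h1 : 1 ≤ i) (h2 : i ≤ 2*k)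
    (ht : 1 ≤ t) (ht' : t ≤ 4*n+2) : mult n e i t + mult n e i (8*n+5-t) = 1 := by
  have hmaps : ∀ j ∈ Finset.Icc 1 (4*n+2),
      min (e i j) (8*n+5 - e i j) ∈ Finset.Icc 1 (4*n+2) := by
    intro j hj
    rw [Finset.mem_Icc] at hj
    have := he.mem_range i j h1 h2 hj.1 hj.2
    rw [Finset.mem_Icc]
    omega
  have hinj : Set.InjOn (fun j => min (e i j) (8*n+5 - e i j)) (Finset.Icc 1 (4*n+2)) := by
    intro a ha b hb hab
    have ha' := Finset.mem_Icc.1 (Finset.mem_coe.1 ha)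
    have hb' := Finset.mem_Icc.1 (Finset.mem_coe.1 hb)
    have r1 := he.mem_range i a h1 h2 ha'.1 ha'.2
    have r2 := he.mem_range i b h1 h2 hb'.1 hb'.2
    have r3 := he.no_pair i a b h1 h2 ha'.1 ha'.2 hb'.1 hb'.2
    apply row_inj he h1 h2 (Finset.mem_coe.1 ha) (Finset.mem_coe.1 hb)
    dsimp only at hab
    omega
  obtain ⟨j, hj, hjt⟩ := Finset.surjOn_of_injOn_of_card_le _ hmaps hinj le_rfl
    (Finset.mem_coe.2 (Finset.mem_Icc.2 ⟨ht, ht'⟩))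
  have hj' := Finset.mem_Icc.1 (Finset.mem_coe.1 hj)
  have r1 := he.mem_range i j h1 h2 hj'.1 hj'.2
  dsimp only at hjt
  have hpos : 1 ≤ mult n e i t ∨ 1 ≤ mult n e i (8*n+5-t) := by
    have hor : e i j = t ∨ e i j = 8*n+5-t := by omega
    rcases hor with h | h
    · exact Or.inl (Finset.card_pos.2 ⟨j, Finset.mem_filter.2 ⟨Finset.mem_coe.1 hj, h⟩⟩)
    · exact Or.inr (Finset.card_pos.2 ⟨j, Finset.mem_filter.2 ⟨Finset.mem_coe.1 hj, h⟩⟩)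
  have hnot : ¬ (1 ≤ mult n e i t ∧ 1 ≤ mult n e i (8*n+5-t)) := by
    rintro ⟨ha, hb⟩
    obtain ⟨a, ha⟩ := Finset.card_pos.1 ha
    obtain ⟨b, hb⟩ := Finset.card_pos.1 hb
    rw [Finset.mem_filter, Finset.mem_Icc] at ha hb
    have := he.no_pair i a b h1 h2 ha.1.1 ha.1.2 hb.1.1 hb.1.2
    omega
  have := mult_le_one he h1 h2 t
  have := mult_le_one he h1 h2 (8*n+5-t)
  omega

lemma card_entries (t : ℕ) :
    (((Finset.Icc 1 (2*k)) ×ˢ (Finset.Icc 1 (4*n+2))).filter (fun p => e p.1 p.2 = t)).card =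
      ∑ i ∈ Finset.Icc 1 (2*k), mult n e i t := by
  unfold mult
  simp only [Finset.card_filter]
  rw [Finset.sum_product]

lemma sum_mult (he : IsAdmissible n k e) {t : ℕ} (ht : 1 ≤ t) (ht' : t ≤ 4*n+2) :
    ∑ i ∈ Finset.Icc 1 (2*k), mult n e i t = k := by
  have hb := he.balanced t ht (by omega)
  rw [card_entries, card_entries] at hb
  have hs : ∑ i ∈ Finset.Icc 1 (2*k), (mult n e i t + mult n e i (8*n+5-t)) =
      ∑ i ∈ Finset.Icc 1 (2*k), 1 := by
    apply Finset.sum_congr rfl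
    intro i hi
    rw [Finset.mem_Icc] at hi
    exact mult_add_mult he hi.1 hi.2 ht ht'
  rw [Finset.sum_add_distrib] at hs
  simp only [Finset.sum_const, Nat.card_Icc, smul_eq_mul] at hs
  omega

lemma sum_below (he : IsAdmissible n k e) {m : ℕ} (hm : m ≤ 4*n+2) :
    ∑ i ∈ Finset.Icc 1 (2*k), below n e i m = k * m := by
  induction m with
  | zero =>
    apply Finset.sum_eq_zero
    intro i hi
    rw [Finset.mem_Icc] at hi
    exact below_zero he hi.1 hi.2
  | succ m ih =>
    simp only [below_succ, Finset.sum_add_distrib]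
    rw [ih (by omega), sum_mult he (by omega) hm]
    ring

lemma even_below (he : IsAdmissible n k e) {i : ℕ} (h1 : 1 ≤ i) (h2 : i ≤ 2*k) :
    below n e i (4*n+2) % 2 = 0 := by
  have hb := he.even_big i h1 h2
  have hc := Finset.card_filter_add_card_filter_not (s := Finset.Icc 1 (4*n+2))
    (fun j => e i j ≤ 4*n+2)
  simp only [not_le, Nat.card_Icc] at hc
  unfold below
  rw [Nat.even_iff] at hb
  omega

/-! ### The entries up to `4n-4` -/

lemma mult_last (he : IsAdmissible n k e) (hk : 1 ≤ k)
    (hlast : smallSet n e (2*k) = setB n ∪ {4*n-1, 4*n+1}) {t : ℕ} (ht : 1 ≤ t)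
    (ht' : t ≤ 4*n+2) :
    mult n e (2*k) t =
      if (t ≤ 4*n-4 ∧ t % 2 = 0) ∨ t = 4*n-1 ∨ t = 4*n+1 then 1 else 0 := by
  have hm : t ∈ smallSet n e (2*k) ↔ (t ≤ 4*n-4 ∧ t % 2 = 0) ∨ t = 4*n-1 ∨ t = 4*n+1 := by
    rw [hlast]
    simp only [setB, Finset.mem_union, Finset.mem_filter, Finset.mem_Icc, Finset.mem_insert,
      Finset.mem_singleton]
    omega
  rw [mem_smallSet] at hm
  have := mult_le_one he (i := 2*k) (by omega) le_rfl t
  split_ifs with h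
  · have := hm.2 h; omega
  · by_contra hc
    exact h (hm.1 ⟨ht', by omega⟩)

lemma below_last_even (he : IsAdmissible n k e) (hk : 1 ≤ k)
    (hlast : smallSet n e (2*k) = setB n ∪ {4*n-1, 4*n+1}) {j : ℕ} (hj : j ≤ 2*n-2) :
    below n e (2*k) (2*j) = j := by
  induction j with
  | zero => exact below_zero he (by omega) le_rfl
  | succ j ih =>
    have h0 := ih (by omega)
    have h1 := below_succ n e (2*k) (2*j)
    have h2 := below_succ n e (2*k) (2*j+1)
    have h3 := mult_last he hk hlast (t := 2*j+1) (by omega) (by omega)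
    have h4 := mult_last he hk hlast (t := 2*j+1+1) (by omega) (by omega)
    rw [if_neg (by omega)] at h3
    rw [if_pos (by omega)] at h4
    rw [show 2*(j+1) = 2*j+1+1 by ring]
    omega

lemma below_even (he : IsAdmissible n k e) (hk : 1 ≤ k)
    (hlast : smallSet n e (2*k) = setB n ∪ {4*n-1, 4*n+1}) {j i : ℕ} (hj : j ≤ 2*n-2)
    (h1 : 1 ≤ i) (h2 : i ≤ 2*k) : below n e i (2*j) = j := by
  have hlow : ∀ i, 1 ≤ i → i ≤ 2*k → j ≤ below n e i (2*j) := by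
    intro i h1 h2
    have := below_antitone he (2*j) h1 h2 le_rfl
    rwa [below_last_even he hk hlast hj] at this
  have := eq_of_lower (fun i h h' => hlow i h (by omega)) (fun i h h' => hlow i (by omega) h')
    ((sum_below he (by omega)).trans (by ring)) i h1 h2
  simpa using this

/-- As `below i (2j)` does not depend on `i`, the multiplicity of `2j+1` is nonincreasing in `i`. -/
lemma mult_odd (he : IsAdmissible n k e) (hk : 1 ≤ k) (hn : 1 ≤ n)
    (hlast : smallSet n e (2*k) = setB n ∪ {4*n-1, 4*n+1}) {j i : ℕ} (hj : j ≤ 2*n-2)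
    (h1 : 1 ≤ i) (h2 : i ≤ 2*k) : mult n e i (2*j+1) = if i ≤ k then 1 else 0 := by
  refine eq_of_antitone (u := fun i => mult n e i (2*j+1)) (fun i h h' => mult_le_one he h h' _)
    (fun a b ha hab hb => ?_) (sum_mult he (by omega) (by omega)) i h1 h2
  have := below_antitone he (2*j+1) ha hab hb
  rw [below_succ, below_succ, below_even he hk hlast hj ha (by omega),
    below_even he hk hlast hj (by omega) hb] at this
  omega

lemma mult_split (he : IsAdmissible n k e) (hk : 1 ≤ k) (hn : 1 ≤ n)
    (hlast : smallSet n e (2*k) = setB n ∪ {4*n-1, 4*n+1}) {t i : ℕ} (ht : 1 ≤ t)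
    (ht' : t ≤ 4*n-4) (h1 : 1 ≤ i) (h2 : i ≤ 2*k) :
    mult n e i t = if (i ≤ k ↔ t % 2 = 1) then 1 else 0 := by
  obtain ⟨j, hj | hj⟩ : ∃ j, t = 2*j+1 ∨ t = 2*j+1+1 := ⟨(t-1)/2, by omega⟩
  · subst hj
    rw [mult_odd he hk hn hlast (by omega) h1 h2]
    congr 1
    simp
  · subst hj
    have a1 := mult_odd he hk hn hlast (j := j) (by omega) h1 h2
    have a2 := below_even he hk hlast (j := j) (by omega) h1 h2
    have a3 := below_even he hk hlast (j := j+1) (by omega) h1 h2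
    have a4 := below_succ n e i (2*j)
    have a5 := below_succ n e i (2*j+1)
    rw [show 2*(j+1) = 2*j+1+1 by ring] at a3
    split_ifs at a1 ⊢ <;> omega

end Admissible

/-! ### The six entries `4n-3,…,4n+2` -/

/-- The statement about the last six small entries: `a t i` is the multiplicity in row `i` of the
`t`-th of them, and `g m i` counts those among the first `m` lying in row `i`. The last row is
`{3,5}`. -/
lemma six_columns {k : ℕ} (hk : 1 ≤ k) (a g : ℕ → ℕ → ℕ)
    (ha : ∀ t i, 1 ≤ i → i ≤ 2*k → a t i ≤ 1)
    (g0 : ∀ i, 1 ≤ i → i ≤ 2*k → g 0 i = 0)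
    (gs : ∀ m i, 1 ≤ i → i ≤ 2*k → g (m+1) i = g m i + a (m+1) i)
    (hanti : ∀ m i i', 1 ≤ i → i ≤ i' → i' ≤ 2*k → g m i' ≤ g m i)
    (hsa : ∀ t, 1 ≤ t → t ≤ 6 → ∑ i ∈ Finset.Icc 1 (2*k), a t i = k)
    (hsg : ∀ m, m ≤ 6 → ∑ i ∈ Finset.Icc 1 (2*k), g m i = k * m)
    (heven : ∀ i, 1 ≤ i → i ≤ 2*k → g 6 i % 2 = 0)
    (ha1 : ∀ i, 1 ≤ i → i ≤ 2*k → a 1 i = if i ≤ k then 1 else 0)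
    (l2 : a 2 (2*k) = 0) (l3 : a 3 (2*k) = 1) (l4 : a 4 (2*k) = 0) (l5 : a 5 (2*k) = 1)
    (l6 : a 6 (2*k) = 0) :
    (a 2 1 = 1 ∧ a 3 1 = 0 ∧ a 4 1 = 1 ∧ a 5 1 = 0 ∧ a 6 1 = 1) ∨
    ((a 2 1 = 1 ∧ a 3 1 = 1 ∧ a 4 1 = 0 ∧ a 5 1 = 0 ∧ a 6 1 = 1) ∧
     (a 2 k = 0 ∧ a 3 k = 0 ∧ a 4 k = 1 ∧ a 5 k = 1 ∧ a 6 k = 1) ∧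
     (a 2 (k+1) = 1 ∧ a 3 (k+1) = 0 ∧ a 4 (k+1) = 1 ∧ a 5 (k+1) = 0 ∧ a 6 (k+1) = 0)) := by
  -- All linear relations within a row.
  have row : ∀ i, 1 ≤ i → i ≤ 2*k → g 1 i = a 1 i ∧ g 2 i = g 1 i + a 2 i ∧
      g 3 i = g 2 i + a 3 i ∧ g 4 i = g 3 i + a 4 i ∧ g 5 i = g 4 i + a 5 i ∧
      g 6 i = g 5 i + a 6 i ∧ a 2 i ≤ 1 ∧ a 3 i ≤ 1 ∧ a 4 i ≤ 1 ∧ a 5 i ≤ 1 ∧ a 6 i ≤ 1 := by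
    intro i h h'
    have : g 1 i = g 0 i + a 1 i := gs 0 i h h'
    have := g0 i h h'
    exact ⟨by omega, gs 1 i h h', gs 2 i h h', gs 3 i h h', gs 4 i h h',
      gs 5 i h h', ha 2 i h h', ha 3 i h h', ha 4 i h h', ha 5 i h h', ha 6 i h h'⟩
  have a1up : ∀ i, 1 ≤ i → i ≤ k → a 1 i = 1 := by
    intro i h h'; rw [ha1 i h (by omega), if_pos h']
  have a1lo : ∀ i, k < i → i ≤ 2*k → a 1 i = 0 := by
    intro i h h'; rw [ha1 i (by omega) h', if_neg (by omega)]
  have rl := row (2*k) (by omega) le_rfl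
  have rl1 := a1lo (2*k) (by omega) le_rfl
  have g5 : ∀ i, 1 ≤ i → i ≤ 2*k → 2 ≤ g 5 i := by
    intro i h h'; have := hanti 5 i (2*k) h h' le_rfl; omega
  have g3 : ∀ i, 1 ≤ i → i ≤ 2*k → 1 ≤ g 3 i := by
    intro i h h'; have := hanti 3 i (2*k) h h' le_rfl; omega
  have g6 : ∀ i, 1 ≤ i → i ≤ 2*k → 2 ≤ g 6 i := by
    intro i h h'; have := g5 i h h'; have := row i h h'; omega
  have rk := row k hk (by omega)
  -- If the lower rows have two elements, none of them is the sixth, so the upper rows all have it.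
  have six : (∀ i, k < i → i ≤ 2*k → g 6 i ≤ 2) →
      ∀ i, 1 ≤ i → i ≤ 2*k → a 6 i = if i ≤ k then 1 else 0 := by
    intro h
    refine eq_of_upper (fun i h1 h2 => ha 6 i h1 (by omega)) (fun i h1 h2 => ?_) ?_
    · have := h i h1 h2
      have := g5 i (by omega) h2
      have := row i (by omega) h2
      omega
    · rw [hsa 6 (by omega) le_rfl]; ring
  have gk : 4 ≤ g 6 k := by
    by_contra hc
    have hev := heven k hk (by omega)
    have h6 := six (fun i h h' => by have := hanti 6 k i hk h.le h'; omega) k hk (by omega)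
    rw [if_pos le_rfl] at h6
    have := g5 k hk (by omega)
    omega
  have size := eq_of_lower (k := k) (p := 4) (q := 2) (u := g 6)
    (fun i h h' => gk.trans (hanti 6 i k h h' (by omega))) (fun i h h' => g6 i (by omega) h')
    (hsg 6 le_rfl)
  have a6 := six (fun i h h' => by rw [size i (by omega) h', if_neg (by omega)])
  have up : ∀ i, 1 ≤ i → i ≤ k → a 6 i = 1 ∧ g 5 i = 3 := by
    intro i h h'
    have s1 := size i h (by omega)
    have s2 := a6 i h (by omega)
    rw [if_pos h'] at s1 s2
    have := row i h (by omega)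
    omega
  have lo : ∀ i, k < i → i ≤ 2*k → a 6 i = 0 ∧ g 5 i = 2 := by
    intro i h h'
    have s1 := size i (by omega) h'
    have s2 := a6 i (by omega) h'
    rw [if_neg (by omega)] at s1 s2
    have := row i (by omega) h'
    omega
  have r1 := row 1 le_rfl (by omega)
  have r11 := a1up 1 le_rfl hk
  have rk1 := a1up k hk le_rfl
  have u1 := up 1 le_rfl hk
  have uk := up k hk le_rfl
  -- If row 1 omits the second element, so do the upper rows, and the last row must contain it.
  have c2 : a 2 1 = 1 := by
    by_contra hc
    have := eq_of_upper (k := k) (p := 0) (q := 1) (u := a 2)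
      (fun i h h' => by
        have := hanti 2 1 i le_rfl h (by omega)
        have := row i h (by omega)
        have := a1up i h h'
        omega)
      (fun i h h' => ha 2 i (by omega) h')
      (by rw [hsa 2 (by omega) (by omega)]; ring) (2*k) (by omega) le_rfl
    rw [if_neg (by omega)] at this
    omega
  -- If row 1 contains the fifth element, so do the upper rows, and the last row must omit it.
  have c5 : a 5 1 = 0 := by
    by_contra hc
    have := eq_of_lower (k := k) (p := 1) (q := 0) (u := a 5)
      (fun i h h' => by
        have := hanti 4 1 i le_rfl h (by omega)
        have := row i h (by omega)
        have := up i h h'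
        omega)
      (fun i h h' => Nat.zero_le _)
      (by rw [hsa 5 (by omega) (by omega)]; ring) (2*k) (by omega) le_rfl
    rw [if_neg (by omega)] at this
    omega
  by_cases c3 : a 3 1 = 0
  · left; omega
  right
  have gk3 : g 3 k = 1 := by
    by_contra hc
    have := g3 k hk (by omega)
    have := eq_of_lower (k := k) (p := 2) (q := 1) (u := g 3)
      (fun i h h' => by
        have := hanti 3 i k h h' (by omega)
        omega)
      (fun i h h' => g3 i (by omega) h')
      (hsg 3 (by omega)) 1 (by omega) (by omega)
    rw [if_pos (by omega)] at this
    omega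
  have rk' := row (k+1) (by omega) (by omega)
  have rk1' := a1lo (k+1) (by omega) (by omega)
  have uk' := lo (k+1) (by omega) (by omega)
  have gk3' := hanti 3 k (k+1) hk (by omega) (by omega)
  have d2 : a 2 (k+1) = 1 := by
    by_contra hc
    have := eq_of_upper (k := k) (p := 1) (q := 0) (u := a 2)
      (fun i h h' => ha 2 i h (by omega))
      (fun i h h' => by
        have := hanti 2 (k+1) i (by omega) h h'
        have := row i (by omega) h'
        omega)
      (by rw [hsa 2 (by omega) (by omega)]; ring) k (by omega) (by omega)
    rw [if_pos le_rfl] at this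
    omega
  have d5 : a 5 (k+1) = 0 := by
    by_contra hc
    have := eq_of_lower (k := k) (p := 0) (q := 1) (u := a 5)
      (fun i h h' => Nat.zero_le _)
      (fun i h h' => by
        have := hanti 4 (k+1) i (by omega) h h'
        have := row i (by omega) h'
        have := lo i h h'
        omega)
      (by rw [hsa 5 (by omega) (by omega)]; ring) k (by omega) (by omega)
    rw [if_pos le_rfl] at this
    omega
  omega

/-- case (iv), `S(2k) = B ∪ {4n-1, 4n+1}` leads to pattern `X₄`,
or else to pattern `Y₁` on rows `1, k, k+1, 2k`. -/
theorem stmt_8 (n k : ℕ) (hn : 1 ≤ n) (hk : 1 ≤ k) (e : ℕ → ℕ → ℕ)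
    (he : IsAdmissible n k e) (hsupp : SupportedOnXv6 n k e)
    (hlast : smallSet n e (2*k) = setB n ∪ {4*n-1, 4*n+1}) :
    smallSet n e 1 = setA n ∪ {4*n-2, 4*n, 4*n+2} ∨
    (smallSet n e 1 = setA n ∪ {4*n-2, 4*n-1, 4*n+2} ∧
     smallSet n e k = setA n ∪ {4*n, 4*n+1, 4*n+2} ∧
     smallSet n e (k+1) = setB n ∪ {4*n-2, 4*n}) := by
  have hN : ∀ m, (m+1) + (4*n-4) = (m + (4*n-4)) + 1 := fun m => by ring
  have hbase : ∀ i, 1 ≤ i → i ≤ 2*k → below n e i (4*n-4) = 2*n-2 := by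
    intro i h h'
    have := below_even he hk hlast (j := 2*n-2) le_rfl h h'
    rwa [show 2*(2*n-2) = 4*n-4 by omega] at this
  have hge : ∀ m i, 1 ≤ i → i ≤ 2*k → 2*n-2 ≤ below n e i (m + (4*n-4)) := by
    intro m i h h'
    induction m with
    | zero => rw [Nat.zero_add, hbase i h h']
    | succ m ih => rw [hN, below_succ]; omega
  have key := six_columns hk (fun t i => mult n e i (t + (4*n-4)))
    (fun m i => below n e i (m + (4*n-4)) - (2*n-2))
    (fun t i h h' => mult_le_one he h h' _)
    (fun i h h' => by simp only [Nat.zero_add, hbase i h h', Nat.sub_self])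
    (fun m i h h' => by
      have := hge m i h h'
      simp only [hN, below_succ]
      omega)
    (fun m i i' h hi h' => Nat.sub_le_sub_right (below_antitone he _ h hi h') _)
    (fun t h h' => sum_mult he (by omega) (by omega))
    (fun m h => by
      have hs := sum_below he (m := m + (4*n-4)) (by omega)
      have hd : ∑ i ∈ Finset.Icc 1 (2*k), below n e i (m + (4*n-4)) =
          ∑ i ∈ Finset.Icc 1 (2*k),
            ((below n e i (m + (4*n-4)) - (2*n-2)) + (2*n-2)) := by
        apply Finset.sum_congr rfl
        intro i hi
        rw [Finset.mem_Icc] at hi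
        have := hge m i hi.1 hi.2
        omega
      rw [hd, Finset.sum_add_distrib, Finset.sum_const, Nat.card_Icc, smul_eq_mul,
        Nat.add_sub_cancel, show 4*n-4 = 2*(2*n-2) by omega] at hs
      have hr : k * (m + 2*(2*n-2)) = k*m + 2*k*(2*n-2) := by ring
      rw [hr] at hs
      rw [show 4*n-4 = 2*(2*n-2) by omega]
      exact Nat.add_right_cancel hs)
    (fun i h h' => by
      have := even_below he h h'
      have := hge 6 i h h'
      simp only [show 6 + (4*n-4) = 4*n+2 by omega] at *
      omega)
    (fun i h h' => by
      have := mult_odd he hk hn hlast (j := 2*n-2) le_rfl h h'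
      rwa [show 2*(2*n-2)+1 = 1 + (4*n-4) by omega] at this)
    (by
      rw [mult_last he hk hlast (by omega) (by omega), if_neg (by omega)])
    (by
      rw [mult_last he hk hlast (by omega) (by omega), if_pos (by omega)])
    (by
      rw [mult_last he hk hlast (by omega) (by omega), if_neg (by omega)])
    (by
      rw [mult_last he hk hlast (by omega) (by omega), if_pos (by omega)])
    (by
      rw [mult_last he hk hlast (by omega) (by omega), if_neg (by omega)])
  simp only [show 2 + (4*n-4) = 4*n-2 by omega, show 3 + (4*n-4) = 4*n-1 by omega,
    show 4 + (4*n-4) = 4*n by omega, show 5 + (4*n-4) = 4*n+1 by omega,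
    show 6 + (4*n-4) = 4*n+2 by omega] at key
  have h0 : ∀ i, 1 ≤ i → i ≤ 2*k → mult n e i 0 = 0 := by
    intro i h h'
    have hz := below_zero he h h'
    unfold below at hz
    unfold mult
    simpa using hz
  -- A small set is determined by the half its row lies in and by the entries `4n-2,…,4n+2`.
  have fin : ∀ (i : ℕ) (T : Finset ℕ), 1 ≤ i → i ≤ 2*k →
      (∀ t, t ∈ T ↔ 1 ≤ t ∧ t ≤ 4*n+2 ∧ ((t ≤ 4*n-3 ∧ (i ≤ k ↔ t % 2 = 1)) ∨
        (4*n-2 ≤ t ∧ mult n e i t = 1))) → smallSet n e i = T := by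
    intro i T h h' hT
    ext t
    rw [mem_smallSet, hT]
    have hle := mult_le_one he h h' t
    rcases Nat.eq_zero_or_pos t with rfl | ht
    · have := h0 i h h'; omega
    rcases Nat.lt_or_ge (4*n-4) t with hlt | hge'
    · rcases Nat.lt_or_ge (4*n-3) t with hlt' | hge''
      · omega
      · have hodd := mult_odd he hk hn hlast (j := 2*n-2) le_rfl h h'
        rw [show 2*(2*n-2)+1 = t by omega] at hodd
        split_ifs at hodd <;> omega
    · have hs := mult_split he hk hn hlast ht hge' h h'
      split_ifs at hs <;> omega
  have cases5 : ∀ t, 4*n-2 ≤ t → t ≤ 4*n+2 →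
      t = 4*n-2 ∨ t = 4*n-1 ∨ t = 4*n ∨ t = 4*n+1 ∨ t = 4*n+2 := by
    intro t _ _; omega
  have main : ∀ (i : ℕ) (T : Finset ℕ), 1 ≤ i → i ≤ 2*k →
      (∀ t, t ∈ T → 1 ≤ t ∧ t ≤ 4*n+2) →
      (∀ t, 1 ≤ t → t ≤ 4*n-3 → (t ∈ T ↔ (i ≤ k ↔ t % 2 = 1))) →
      (4*n-2 ∈ T ↔ mult n e i (4*n-2) = 1) → (4*n-1 ∈ T ↔ mult n e i (4*n-1) = 1) →
      (4*n ∈ T ↔ mult n e i (4*n) = 1) → (4*n+1 ∈ T ↔ mult n e i (4*n+1) = 1) →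
      (4*n+2 ∈ T ↔ mult n e i (4*n+2) = 1) → smallSet n e i = T := by
    intro i T h h' hr hlow t2 t3 t4 t5 t6
    refine fin i T h h' fun t => ?_
    by_cases hb : 1 ≤ t ∧ t ≤ 4*n+2
    · rcases Nat.lt_or_ge (4*n-3) t with hlt | hge'
      · have hb' : t ∈ T ↔ mult n e i t = 1 := by
          rcases cases5 t (by omega) hb.2 with rfl | rfl | rfl | rfl | rfl <;> assumption
        rw [hb']; omega
      · rw [hlow t hb.1 hge']; omega
    · exact ⟨fun ht => absurd (hr t ht) hb, fun ht => absurd ⟨ht.1, ht.2.1⟩ hb⟩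
  rcases key with ⟨x2, x3, x4, x5, x6⟩ |
    ⟨⟨x2, x3, x4, x5, x6⟩, ⟨y2, y3, y4, y5, y6⟩, ⟨z2, z3, z4, z5, z6⟩⟩
  · left
    apply main 1 _ le_rfl (by omega) <;> intros <;>
      simp only [setA, Finset.mem_union, Finset.mem_filter, Finset.mem_Icc, Finset.mem_insert,
        Finset.mem_singleton, true_or, or_true, true_iff] at * <;> omega
  · right
    refine ⟨?_, ?_, ?_⟩
    · apply main 1 _ le_rfl (by omega) <;> intros <;>
        simp only [setA, Finset.mem_union, Finset.mem_filter, Finset.mem_Icc, Finset.mem_insert,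
          Finset.mem_singleton, true_or, or_true, true_iff] at * <;> omega
    · apply main k _ hk (by omega) <;> intros <;>
        simp only [setA, Finset.mem_union, Finset.mem_filter, Finset.mem_Icc, Finset.mem_insert,
          Finset.mem_singleton, true_or, or_true, true_iff] at * <;> omega
    · apply main (k+1) _ (by omega) (by omega) <;> intros <;>
        simp only [setB, Finset.mem_union, Finset.mem_filter, Finset.mem_Icc, Finset.mem_insert,
          Finset.mem_singleton, true_or, or_true, true_iff] at * <;> omega
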